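/- Let m, n be integers such that for every integer t ≥ 0 the matrix A_t = [[0,0,1],[1,0,m−t],[0,1,n]] has one real eigenvalue and two non-real complex conjugate eigenvalues. Then for every ε > 0 there exists C > 0 such that for every integer t > C and every choice of eigenbasis (g1,g2,g3) for A_t, the convex hull of T_{A_t}((1,0,0)) ∪ T_{A_t}((0,1,0)) is contained in the ε-tubular neighborhood of the convex hull of the three points (1,0,0), (0,1,0), (0,−1,0). -/

import Mathlib

open Polynomial

/-- A real 3×3 matrix has NRS-spectrum if its characteristic polynomial has one
real root and a pair of non-real complex conjugate roots. -/
def HasNRSSpectrum (A : Matrix (Fin 3) (Fin 3) ℝ) : Prop :=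
  ∃ (r : ℝ) (z : ℂ), z.im ≠ 0 ∧
    A.charpoly.map (algebraMap ℝ ℂ) =
      (X - C (r : ℂ)) * (X - C z) * (X - C ((starRingEnd ℂ) z))

/-- An eigenbasis (g1,g2,g3) for A: g1 is a real eigenvector and g2, g3 are the
real and imaginary parts of a complex eigenvector; the three vectors form a
basis of ℝ³. -/
def IsEigenbasis (A : Matrix (Fin 3) (Fin 3) ℝ) (g1 g2 g3 : Fin 3 → ℝ) : Prop :=
  g1 ≠ 0 ∧ (∃ r : ℝ, A.mulVec g1 = r • g1) ∧
  (∃ (c : ℂ) (v : Fin 3 → ℂ), v ≠ 0 ∧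
      (A.map (Complex.ofReal : ℝ → ℂ)).mulVec v = c • v ∧
      g2 = (fun i => (v i).re) ∧ g3 = (fun i => (v i).im)) ∧
  LinearIndependent ℝ ![g1, g2, g3]

/-- The Klein–Voronoi orbit T_A(v) of a point v = x·g1 + y·g2 + z·g3, written in
the eigenbasis (g1,g2,g3). -/
def KVorbit (g1 g2 g3 v : Fin 3 → ℝ) : Set (Fin 3 → ℝ) :=
  { p | ∃ x y z θ : ℝ, v = x • g1 + y • g2 + z • g3 ∧
      p = x • g1 + (y * Real.cos θ + z * Real.sin θ) • g2 +
            (-y * Real.sin θ + z * Real.cos θ) • g3 }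

/-- Euclidean distance on ℝ³ (as `Fin 3 → ℝ`). -/
noncomputable def euclDist (p q : Fin 3 → ℝ) : ℝ :=
  Real.sqrt (∑ i, (p i - q i) ^ 2)

/-- The ε-tubular neighborhood of a set: points at Euclidean distance < ε from it. -/
def tubNbhd (ε : ℝ) (S : Set (Fin 3 → ℝ)) : Set (Fin 3 → ℝ) :=
  { p | ∃ q ∈ S, euclDist p q < ε }

/-! `A_t` is the companion matrix of `X ^ 3 - n X ^ 2 - (m - t) X - 1`, so identifying `v ∈ ℝ³`
with the polynomial `v 0 + v 1 X + v 2 X ^ 2` turns `A_t` into multiplication by `X`, and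
evaluation at an eigenvalue is a left eigenvector of `A_t`. Along the orbit of `v` the value at
the real eigenvalue `r` is therefore constant, while the value at the complex eigenvalue `c` is
multiplied by `exp (i θ)`. Since `r + 2 re c = n`, `|c| ^ 2 + 2 r re c = t - m` and
`r |c| ^ 2 = 1`, as `t → ∞` the real part of `c` stays bounded while `|im c| → ∞` and `r → 0`.
Interpolating from the values at `r` and `c`, the orbit point of `(1, 0, 0)` is within
`O(1 / |im c|)` of `(1, 0, 0)`, and that of `(0, 1, 0)` is within `O(1 / |im c|)` of
`(0, cos θ, 0)`. -/

section Eigenfunctionals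

variable {V : Type*} [AddCommGroup V] [Module ℝ V] {T : V →ₗ[ℝ] V} {φ : V →ₗ[ℝ] ℂ} {μ : ℂ}

lemma map_eq_zero_of_eigenvector (hφ : ∀ v, φ (T v) = μ * φ v) {g : V} {r : ℝ}
    (hg : T g = r • g) (hμ : μ ≠ r) : φ g = 0 := by
  have h : μ * φ g = r * φ g := by rw [← hφ, hg, map_smul, Complex.real_smul]
  exact (mul_eq_mul_right_iff.1 h).resolve_left hμ

lemma map_add_I_mul_map_eq_zero (hφ : ∀ v, φ (T v) = μ * φ v) {g g' : V} {c : ℂ}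
    (hg : T g = c.re • g - c.im • g') (hg' : T g' = c.im • g + c.re • g') (hμ : μ ≠ c) :
    φ g + Complex.I * φ g' = 0 := by
  have h : μ * φ g = c.re * φ g - c.im * φ g' := by simp [← hφ, hg]
  have h' : μ * φ g' = c.im * φ g + c.re * φ g' := by simp [← hφ, hg']
  have hmul : (μ - c) * (φ g + Complex.I * φ g') = 0 := by
    rw [← Complex.re_add_im c]
    linear_combination h + Complex.I * h' - c.im * φ g' * Complex.I_sq
  exact (mul_eq_zero.1 hmul).resolve_left (sub_ne_zero.2 hμ)

lemma map_sub_I_mul_map_eq_zero (hφ : ∀ v, φ (T v) = μ * φ v) {g g' : V} {c : ℂ}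
    (hg : T g = c.re • g - c.im • g') (hg' : T g' = c.im • g + c.re • g')
    (hμ : μ ≠ (starRingEnd ℂ) c) : φ g - Complex.I * φ g' = 0 := by
  have h := map_add_I_mul_map_eq_zero (g := g) (g' := -g') hφ
    (by simp [hg]) (by simp [hg', add_comm]) hμ
  rwa [map_neg, mul_neg, ← sub_eq_add_neg] at h

end Eigenfunctionals

section Orbits

variable {φ : (Fin 3 → ℝ) →ₗ[ℝ] ℂ} {g1 g2 g3 v p : Fin 3 → ℝ}

lemma map_eq_of_mem_KVorbit (h2 : φ g2 = 0) (h3 : φ g3 = 0) (hp : p ∈ KVorbit g1 g2 g3 v) :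
    φ p = φ v := by
  obtain ⟨x, y, z, θ, rfl, rfl⟩ := hp
  simp only [map_add, map_smul, h2, h3, smul_zero]

lemma exists_map_eq_exp_mul_of_mem_KVorbit (h1 : φ g1 = 0) (h23 : φ g2 - Complex.I * φ g3 = 0)
    (hp : p ∈ KVorbit g1 g2 g3 v) : ∃ θ : ℝ, φ p = Complex.exp (θ * Complex.I) * φ v := by
  obtain ⟨x, y, z, θ, rfl, rfl⟩ := hp
  refine ⟨θ, ?_⟩
  simp only [map_add, map_smul, h1, sub_eq_zero.1 h23, smul_zero, zero_add, Complex.real_smul,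
    Complex.exp_mul_I]
  push_cast
  linear_combination -Complex.sin θ * y * φ g3 * Complex.I_sq

end Orbits

section Companion

variable {R : Type*} [CommRing R]

/-- The companion matrix of `X ^ 3 - N * X ^ 2 - M * X - L`: multiplication by `X` modulo this
polynomial, in the basis `1, X, X ^ 2`. -/
def cubicCompanion (L M N : R) : Matrix (Fin 3) (Fin 3) R := !![0, 0, L; 1, 0, M; 0, 1, N]

lemma map_cubicCompanion {S : Type*} [CommRing S] (f : R →+* S) (L M N : R) :
    (cubicCompanion L M N).map f = cubicCompanion (f L) (f M) (f N) := by
  ext i j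
  fin_cases i <;> fin_cases j <;> simp [cubicCompanion]

lemma cubicCompanion_mulVec (L M N : R) (v : Fin 3 → R) :
    (cubicCompanion L M N).mulVec v = ![L * v 2, v 0 + M * v 2, v 1 + N * v 2] := by
  ext i
  fin_cases i <;> simp [cubicCompanion, Matrix.mulVec, dotProduct, Fin.sum_univ_three]

lemma eq_smul_of_cubicCompanion_mulVec_eq {L M N c : R} {v : Fin 3 → R}
    (h : (cubicCompanion L M N).mulVec v = c • v) : v = v 2 • ![c * (c - N) - M, c - N, 1] := by
  rw [cubicCompanion_mulVec] at h
  have h1 : v 0 + M * v 2 = c * v 1 := congrFun h 1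
  have h2 : v 1 + N * v 2 = c * v 2 := congrFun h 2
  ext i
  fin_cases i
  · change v 0 = v 2 * (c * (c - N) - M)
    linear_combination h1 + c * h2
  · change v 1 = v 2 * (c - N)
    linear_combination h2
  · exact (mul_one _).symm

lemma root_of_cubicCompanion_mulVec_eq [IsDomain R] {L M N c : R} {v : Fin 3 → R} (hv : v ≠ 0)
    (h : (cubicCompanion L M N).mulVec v = c • v) : c ^ 3 = L + M * c + N * c ^ 2 := by
  have hspan := eq_smul_of_cubicCompanion_mulVec_eq h
  have hv2 : v 2 ≠ 0 := fun h2 => hv (by rw [hspan, h2, zero_smul])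
  have h0 : L * v 2 = c * v 0 := by
    rw [cubicCompanion_mulVec] at h
    exact congrFun h 0
  have hv0 : v 0 = v 2 * (c * (c - N) - M) := congrFun hspan 0
  apply mul_right_cancel₀ hv2
  linear_combination -h0 - c * hv0

lemma not_linearIndependent_of_cubicCompanion_mulVec_eq [Nontrivial R] {L M N c : R}
    {v w : Fin 3 → R} (hv : (cubicCompanion L M N).mulVec v = c • v)
    (hw : (cubicCompanion L M N).mulVec w = c • w) : ¬ LinearIndependent R ![v, w] := by
  intro hli
  have hv' := eq_smul_of_cubicCompanion_mulVec_eq hv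
  have hw' := eq_smul_of_cubicCompanion_mulVec_eq hw
  have hrel : w 2 • v + -v 2 • w = 0 := by
    calc w 2 • v + -v 2 • w
        = w 2 • v 2 • ![c * (c - N) - M, c - N, 1] +
            -v 2 • w 2 • ![c * (c - N) - M, c - N, 1] := by rw [← hv', ← hw']
      _ = 0 := by module
  have hv2 : v 2 = 0 := neg_eq_zero.1 (LinearIndependent.pair_iff.1 hli _ _ hrel).2
  exact hli.ne_zero 0 (by simpa [hv2] using hv')

end Companion

/-- Evaluation at `c` of the real polynomial `p 0 + p 1 * X + p 2 * X ^ 2` with coefficient vector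
`p`. -/
noncomputable def coeffEval (c : ℂ) : (Fin 3 → ℝ) →ₗ[ℝ] ℂ :=
  Fintype.linearCombination ℝ fun i : Fin 3 => c ^ (i : ℕ)

lemma coeffEval_apply (c : ℂ) (p : Fin 3 → ℝ) :
    coeffEval c p = p 0 + p 1 * c + p 2 * c ^ 2 := by
  simp [coeffEval, Fintype.linearCombination_apply, Fin.sum_univ_three]

lemma coeffEval_cubicCompanion_mulVec {L M N : ℝ} {c : ℂ} (hc : c ^ 3 = L + M * c + N * c ^ 2)
    (p : Fin 3 → ℝ) : coeffEval c ((cubicCompanion L M N).mulVec p) = c * coeffEval c p := by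
  rw [cubicCompanion_mulVec, coeffEval_apply, coeffEval_apply]
  simp only [Matrix.cons_val]
  push_cast
  linear_combination -(p 2 : ℂ) * hc

lemma re_map_ofReal_mulVec {m n : Type*} [Fintype n] (A : Matrix m n ℝ) (v : n → ℂ) :
    (fun i => ((A.map (Complex.ofReal : ℝ → ℂ)).mulVec v i).re) =
      A.mulVec fun i => (v i).re := by
  ext i
  simp [Matrix.mulVec, dotProduct]

lemma im_map_ofReal_mulVec {m n : Type*} [Fintype n] (A : Matrix m n ℝ) (v : n → ℂ) :
    (fun i => ((A.map (Complex.ofReal : ℝ → ℂ)).mulVec v i).im) =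
      A.mulVec fun i => (v i).im := by
  ext i
  simp [Matrix.mulVec, dotProduct]

lemma IsEigenbasis.exists_eigenvalues_cubicCompanion {L M N : ℝ} {g1 g2 g3 : Fin 3 → ℝ}
    (h : IsEigenbasis (cubicCompanion L M N) g1 g2 g3) :
    ∃ (r : ℝ) (c : ℂ), c.im ≠ 0 ∧
      r ^ 3 = L + M * r + N * r ^ 2 ∧ c ^ 3 = L + M * c + N * c ^ 2 ∧
      (cubicCompanion L M N).mulVec g1 = r • g1 ∧
      (cubicCompanion L M N).mulVec g2 = c.re • g2 - c.im • g3 ∧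
      (cubicCompanion L M N).mulVec g3 = c.im • g2 + c.re • g3 := by
  obtain ⟨hg1, ⟨r, hr⟩, ⟨c, v, hv, hc, rfl, rfl⟩, hli⟩ := h
  have hre := re_map_ofReal_mulVec (cubicCompanion L M N) v
  have him := im_map_ofReal_mulVec (cubicCompanion L M N) v
  rw [hc] at hre him
  have hg2 : (cubicCompanion L M N).mulVec (fun i => (v i).re) =
      c.re • (fun i => (v i).re) - c.im • (fun i => (v i).im) := by
    rw [← hre]; ext i; simp
  have hg3 : (cubicCompanion L M N).mulVec (fun i => (v i).im) =
      c.im • (fun i => (v i).re) + c.re • (fun i => (v i).im) := by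
    rw [← him]; ext i; simp [add_comm]
  have hmap : (cubicCompanion L M N).map (Complex.ofReal : ℝ → ℂ) = cubicCompanion (L : ℂ) M N :=
    map_cubicCompanion Complex.ofRealHom L M N
  rw [hmap] at hc
  refine ⟨r, c, fun hc0 => ?_, root_of_cubicCompanion_mulVec_eq hg1 hr,
    root_of_cubicCompanion_mulVec_eq hv hc, hr, hg2, hg3⟩
  have hpair : LinearIndependent ℝ ![fun i => (v i).re, fun i => (v i).im] := by
    convert hli.comp ![1, 2] (by decide) using 1
    ext i
    fin_cases i <;> rfl
  exact not_linearIndependent_of_cubicCompanion_mulVec_eq (by simpa [hc0] using hg2)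
    (by simpa [hc0] using hg3) hpair

lemma coeffs_eq_of_nonreal_root_quadratic {p q : ℝ} {c : ℂ} (hc : c.im ≠ 0)
    (h : c ^ 2 + p * c + q = 0) : p = -2 * c.re ∧ q = c.re ^ 2 + c.im ^ 2 := by
  have him := congrArg Complex.im h
  have hre := congrArg Complex.re h
  simp only [pow_two, Complex.add_im, Complex.mul_im, Complex.ofReal_re, Complex.ofReal_im,
    Complex.zero_im, Complex.add_re, Complex.mul_re, Complex.zero_re] at him hre
  have hp : p = -2 * c.re := mul_right_cancel₀ hc (by linear_combination him)
  exact ⟨hp, by linear_combination hre - c.re * hp⟩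

lemma vieta_of_nonreal_root_cubic {L M N r : ℝ} {c : ℂ} (hr : r ^ 3 = L + M * r + N * r ^ 2)
    (hc : c ^ 3 = L + M * c + N * c ^ 2) (him : c.im ≠ 0) :
    r + 2 * c.re = N ∧ c.re ^ 2 + c.im ^ 2 + 2 * r * c.re = -M ∧
      r * (c.re ^ 2 + c.im ^ 2) = L := by
  have hne : c - r ≠ 0 := fun h => him (by simp [sub_eq_zero.1 h])
  have hquad : c ^ 2 + ((r - N : ℝ) : ℂ) * c + ((r ^ 2 - N * r - M : ℝ) : ℂ) = 0 := by
    have hr' : (r : ℂ) ^ 3 = L + M * r + N * r ^ 2 := mod_cast hr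
    apply mul_left_cancel₀ hne
    push_cast
    linear_combination hc - hr'
  obtain ⟨hsum, hprod⟩ := coeffs_eq_of_nonreal_root_quadratic him hquad
  exact ⟨by linear_combination hsum, by linear_combination -hprod + r * hsum,
    by linear_combination -r * hprod + hr⟩

lemma IsEigenbasis.exists_eigenfunctionals {L M N : ℝ} {g1 g2 g3 : Fin 3 → ℝ}
    (h : IsEigenbasis (cubicCompanion L M N) g1 g2 g3) :
    ∃ (r : ℝ) (c : ℂ), r + 2 * c.re = N ∧ c.re ^ 2 + c.im ^ 2 + 2 * r * c.re = -M ∧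
      r * (c.re ^ 2 + c.im ^ 2) = L ∧
      ∀ v, ∀ p ∈ KVorbit g1 g2 g3 v, coeffEval r p = coeffEval r v ∧
        ∃ θ : ℝ, coeffEval c p = Complex.exp (θ * Complex.I) * coeffEval c v := by
  obtain ⟨r, c, him, hr, hc, hg1, hg2, hg3⟩ := h.exists_eigenvalues_cubicCompanion
  obtain ⟨hN, hM, hL⟩ := vieta_of_nonreal_root_cubic hr hc him
  have hφr := coeffEval_cubicCompanion_mulVec (c := (r : ℂ)) (mod_cast hr)
  have hφc := coeffEval_cubicCompanion_mulVec hc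
  have hrc : (r : ℂ) ≠ c := fun h => him (by simp [← h])
  have hrc' : (r : ℂ) ≠ (starRingEnd ℂ) c := fun h => him (by simpa using congrArg Complex.im h)
  have hcc' : c ≠ (starRingEnd ℂ) c := fun h => him (Complex.conj_eq_iff_im.1 h.symm)
  let T := (cubicCompanion L M N).mulVecLin
  have hadd := map_add_I_mul_map_eq_zero (T := T) hφr hg2 hg3 hrc
  have hsub := map_sub_I_mul_map_eq_zero (T := T) hφr hg2 hg3 hrc'
  have hr2 : coeffEval r g2 = 0 := by linear_combination (hadd + hsub) / 2
  have hr3 : coeffEval r g3 = 0 := by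
    apply mul_left_cancel₀ Complex.I_ne_zero
    linear_combination (hadd - hsub) / 2
  have hc1 := map_eq_zero_of_eigenvector (T := T) hφc hg1 hrc.symm
  have hc23 := map_sub_I_mul_map_eq_zero (T := T) hφc hg2 hg3 hcc'
  exact ⟨r, c, hN, hM, hL, fun v p hp => ⟨map_eq_of_mem_KVorbit hr2 hr3 hp,
    exists_map_eq_exp_mul_of_mem_KVorbit hc1 hc23 hp⟩⟩

lemma eigenvalue_bounds {M N r a b B : ℝ} (hN : r + 2 * a = N)
    (hM : a ^ 2 + b ^ 2 + 2 * r * a = -M) (hL : r * (a ^ 2 + b ^ 2) = 1) (hB : 1 ≤ B)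
    (hlarge : B ^ 2 + 2 * (|N| + 2) ^ 2 ≤ -M) :
    0 ≤ r ∧ |a| ≤ |N| + 2 ∧ B ≤ |b| ∧ r * |b| ≤ 1 := by
  have hr : 0 < r := pos_of_mul_pos_left (hL ▸ one_pos) (by positivity)
  have hM1 : 1 + N ^ 2 ≤ -M := by nlinarith [sq_abs N, abs_nonneg N]
  have hnorm : 1 ≤ a ^ 2 + b ^ 2 := by
    have hnorm_eq : a ^ 2 + b ^ 2 = (r - N / 2) ^ 2 - N ^ 2 / 4 - M := by
      linear_combination hM - r * hN
    linarith [sq_nonneg (r - N / 2), sq_nonneg N]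
  have hr1 : r ≤ 1 := hL ▸ le_mul_of_one_le_right hr.le hnorm
  have ha : |a| ≤ |N| + 2 := by
    rw [abs_le]
    constructor <;> linarith [neg_abs_le N, le_abs_self N]
  have hBb : B ≤ |b| := by
    have ha2 : a ^ 2 ≤ (|N| + 2) ^ 2 := sq_le_sq.2 (ha.trans (le_abs_self _))
    have hra : r * a ≤ |N| + 2 := by
      calc r * a ≤ r * |a| := by gcongr; exact le_abs_self a
        _ ≤ |a| := mul_le_of_le_one_left (abs_nonneg a) hr1
        _ ≤ |N| + 2 := ha
    have hK : 2 * (|N| + 2) ≤ (|N| + 2) ^ 2 := by nlinarith [abs_nonneg N]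
    have hsq : B ^ 2 ≤ b ^ 2 := by linarith
    exact (le_abs_self B).trans (sq_le_sq.1 hsq)
  have hrb : r * |b| ≤ 1 := by
    calc r * |b| ≤ r * |b| ^ 2 := by gcongr; exact le_self_pow₀ (hB.trans hBb) two_ne_zero
      _ ≤ r * (a ^ 2 + b ^ 2) := by
        rw [sq_abs]
        gcongr
        exact le_add_of_nonneg_left (sq_nonneg a)
      _ = 1 := hL
  exact ⟨hr.le, ha, hBb, hrb⟩

section Interpolation

/-- The quadratic coefficient is read off the divided difference
`(d(c) - d(r)) / (c - r) = d 1 + d 2 * (c + r)`, whose imaginary part is `d 2 * c.im`. -/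
lemma abs_coeff_two_mul_im_sq_le (r : ℝ) (c : ℂ) (d : Fin 3 → ℝ) :
    |d 2| * |c.im| ^ 2 ≤ ‖coeffEval c d - coeffEval r d‖ := by
  have hdiff : (c - r).im = c.im := by simp
  have hquot : (d 1 + d 2 * (c + r) : ℂ).im = d 2 * c.im := by simp
  calc |d 2| * |c.im| ^ 2 = |(c - r).im| * |(d 1 + d 2 * (c + r) : ℂ).im| := by
        rw [hdiff, hquot, abs_mul]
        ring
    _ ≤ ‖c - r‖ * ‖(d 1 + d 2 * (c + r) : ℂ)‖ := by
        gcongr <;> exact Complex.abs_im_le_norm _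
    _ = ‖coeffEval c d - coeffEval r d‖ := by
        rw [← norm_mul, coeffEval_apply, coeffEval_apply]
        ring_nf

lemma abs_coeff_one_mul_im_le (c : ℂ) (d : Fin 3 → ℝ) :
    |d 1| * |c.im| ≤ |(coeffEval c d).im| + 2 * |c.re| * (|d 2| * |c.im|) := by
  have him : (coeffEval c d).im = d 1 * c.im + 2 * c.re * (d 2 * c.im) := by
    simp [coeffEval_apply, pow_two]
    ring
  calc |d 1| * |c.im| = |(coeffEval c d).im - 2 * c.re * (d 2 * c.im)| := by
        rw [him, add_sub_cancel_right, abs_mul]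
    _ ≤ |(coeffEval c d).im| + |2 * c.re * (d 2 * c.im)| := abs_sub _ _
    _ = |(coeffEval c d).im| + 2 * |c.re| * (|d 2| * |c.im|) := by simp only [abs_mul, abs_two]

lemma abs_coeff_zero_le {r : ℝ} (hr0 : 0 ≤ r) (hr1 : r ≤ 1) (d : Fin 3 → ℝ) :
    |d 0| ≤ ‖coeffEval r d‖ + |d 1| * r + |d 2| * r := by
  have hnorm : ‖coeffEval r d‖ = |d 0 + d 1 * r + d 2 * r ^ 2| := by
    rw [coeffEval_apply, ← Real.norm_eq_abs, ← Complex.norm_real]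
    push_cast
    rfl
  calc |d 0| = |(d 0 + d 1 * r + d 2 * r ^ 2) - d 1 * r - d 2 * r ^ 2| := by ring_nf
    _ ≤ |d 0 + d 1 * r + d 2 * r ^ 2| + |d 1 * r| + |d 2 * r ^ 2| :=
        (abs_sub _ _).trans (by gcongr; exact abs_sub _ _)
    _ = ‖coeffEval r d‖ + |d 1| * r + |d 2| * r ^ 2 := by
        rw [hnorm, abs_mul, abs_mul, abs_of_nonneg hr0, abs_of_nonneg (sq_nonneg r)]
    _ ≤ ‖coeffEval r d‖ + |d 1| * r + |d 2| * r := by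
        gcongr
        exact pow_le_of_le_one hr0 hr1 two_ne_zero

variable {r K : ℝ} {c : ℂ}

lemma norm_mul_im_le_of_coeffEval {d : Fin 3 → ℝ} (hK : 2 ≤ K) (hre : |c.re| ≤ K) (him : 1 ≤ |c.im|)
    (hr0 : 0 ≤ r) (hr : r * |c.im| ≤ 1) (hdr : ‖coeffEval r d‖ ≤ 2 * r)
    (hdc : ‖coeffEval c d‖ ≤ 2 * K * |c.im|) (hdim : |(coeffEval c d).im| ≤ K) :
    ‖d‖ * |c.im| ≤ 9 * K ^ 3 := by
  have hr1 : r ≤ 1 := by nlinarith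
  have h2 : |d 2| * |c.im| ≤ 3 * K := by
    refine le_of_mul_le_mul_right ?_ (one_pos.trans_le him)
    calc |d 2| * |c.im| * |c.im| = |d 2| * |c.im| ^ 2 := by ring
      _ ≤ ‖coeffEval c d - coeffEval r d‖ := abs_coeff_two_mul_im_sq_le r c d
      _ ≤ ‖coeffEval c d‖ + ‖coeffEval r d‖ := norm_sub_le _ _
      _ ≤ 2 * K * |c.im| + 2 * r := add_le_add hdc hdr
      _ ≤ 3 * K * |c.im| := by nlinarith
  have h1 : |d 1| * |c.im| ≤ K + 6 * K ^ 2 := by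
    calc |d 1| * |c.im| ≤ |(coeffEval c d).im| + 2 * |c.re| * (|d 2| * |c.im|) :=
          abs_coeff_one_mul_im_le c d
      _ ≤ K + 2 * K * (3 * K) := by gcongr
      _ = K + 6 * K ^ 2 := by ring
  have h0 : |d 0| * |c.im| ≤ 2 + (K + 6 * K ^ 2) + 3 * K := by
    have hd1 : |d 1| * (r * |c.im|) ≤ K + 6 * K ^ 2 := by nlinarith [abs_nonneg (d 1)]
    have hd2 : |d 2| * (r * |c.im|) ≤ 3 * K := by nlinarith [abs_nonneg (d 2)]
    calc |d 0| * |c.im| ≤ (2 * r + |d 1| * r + |d 2| * r) * |c.im| := by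
          gcongr
          exact (abs_coeff_zero_le hr0 hr1 d).trans (by gcongr)
      _ = 2 * (r * |c.im|) + |d 1| * (r * |c.im|) + |d 2| * (r * |c.im|) := by ring
      _ ≤ 2 + (K + 6 * K ^ 2) + 3 * K := by linarith
  rw [← le_div_iff₀ (one_pos.trans_le him), pi_norm_le_iff_of_nonneg (by positivity)]
  intro i
  rw [le_div_iff₀ (one_pos.trans_le him), Real.norm_eq_abs]
  fin_cases i
  · exact h0.trans (by nlinarith)
  · exact h1.trans (by nlinarith)
  · exact h2.trans (by nlinarith)

lemma norm_sub_mul_im_le_of_orbit_e1 {p : Fin 3 → ℝ} {θ : ℝ} (hK : 2 ≤ K) (hre : |c.re| ≤ K)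
    (him : 1 ≤ |c.im|) (hr0 : 0 ≤ r) (hr : r * |c.im| ≤ 1)
    (hpr : coeffEval r p = coeffEval r ![1, 0, 0])
    (hpc : coeffEval c p = Complex.exp (θ * Complex.I) * coeffEval c ![1, 0, 0]) :
    ‖p - ![1, 0, 0]‖ * |c.im| ≤ 9 * K ^ 3 := by
  have he1 : coeffEval c ![1, 0, 0] = 1 := by simp [coeffEval_apply]
  have hdc : coeffEval c (p - ![1, 0, 0]) = Complex.exp (θ * Complex.I) - 1 := by
    rw [map_sub, hpc, he1, mul_one]
  refine norm_mul_im_le_of_coeffEval hK hre him hr0 hr ?_ ?_ ?_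
  · rw [map_sub, hpr, sub_self, norm_zero]
    positivity
  · calc ‖coeffEval c (p - ![1, 0, 0])‖
        ≤ ‖Complex.exp (θ * Complex.I)‖ + ‖(1 : ℂ)‖ := hdc ▸ norm_sub_le _ _
      _ = 2 := by rw [Complex.norm_exp_ofReal_mul_I, norm_one, one_add_one_eq_two]
      _ ≤ 2 * K * |c.im| := by nlinarith
  · have hsin : (coeffEval c (p - ![1, 0, 0])).im = Real.sin θ := by
      rw [hdc, Complex.sub_im, Complex.exp_ofReal_mul_I_im, Complex.one_im, sub_zero]
    rw [hsin]
    linarith [Real.abs_sin_le_one θ]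

lemma norm_sub_mul_im_le_of_orbit_e2 {p : Fin 3 → ℝ} {θ : ℝ} (hK : 2 ≤ K) (hre : |c.re| ≤ K)
    (him : 1 ≤ |c.im|) (hr0 : 0 ≤ r) (hr : r * |c.im| ≤ 1)
    (hpr : coeffEval r p = coeffEval r ![0, 1, 0])
    (hpc : coeffEval c p = Complex.exp (θ * Complex.I) * coeffEval c ![0, 1, 0]) :
    ‖p - ![0, Real.cos θ, 0]‖ * |c.im| ≤ 9 * K ^ 3 := by
  have hdr : coeffEval r (p - ![0, Real.cos θ, 0]) = ((1 - Real.cos θ) * r : ℝ) := by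
    rw [map_sub, hpr]
    simp [coeffEval_apply]
    ring
  have hdc : coeffEval c (p - ![0, Real.cos θ, 0]) = (Real.sin θ : ℂ) * (Complex.I * c) := by
    rw [map_sub, hpc, Complex.exp_mul_I]
    simp [coeffEval_apply]
    ring
  have hsin := Real.abs_sin_le_one θ
  refine norm_mul_im_le_of_coeffEval hK hre him hr0 hr ?_ ?_ ?_
  · rw [hdr, Complex.norm_real, Real.norm_eq_abs,
      abs_of_nonneg (mul_nonneg (sub_nonneg.2 (Real.cos_le_one θ)) hr0)]
    gcongr
    linarith [Real.neg_one_le_cos θ]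
  · calc ‖coeffEval c (p - ![0, Real.cos θ, 0])‖ = |Real.sin θ| * ‖c‖ := by
          rw [hdc, norm_mul, norm_mul, Complex.norm_I, one_mul, Complex.norm_real,
            Real.norm_eq_abs]
      _ ≤ 1 * (|c.re| + |c.im|) := by
          gcongr
          exact Complex.norm_le_abs_re_add_abs_im c
      _ ≤ 2 * K * |c.im| := by nlinarith
  · have him_eq : (coeffEval c (p - ![0, Real.cos θ, 0])).im = Real.sin θ * c.re := by
      rw [hdc, Complex.im_ofReal_mul, Complex.I_mul_im]
    calc |(coeffEval c (p - ![0, Real.cos θ, 0])).im| = |Real.sin θ| * |c.re| := by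
          rw [him_eq, abs_mul]
      _ ≤ 1 * K := by gcongr
      _ = K := one_mul K

end Interpolation

lemma smul_e2_mem_convexHull {y : ℝ} (hy : |y| ≤ 1) :
    ![0, y, 0] ∈ convexHull ℝ {![(1 : ℝ), 0, 0], ![0, 1, 0], ![0, -1, 0]} := by
  obtain ⟨hy1, hy2⟩ := abs_le.1 hy
  have hseg : ![0, y, 0] ∈ segment ℝ ![(0 : ℝ), 1, 0] ![0, -1, 0] := by
    refine ⟨(1 + y) / 2, (1 - y) / 2, by linarith, by linarith, by ring, ?_⟩
    ext i
    fin_cases i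
    · simp
    · change (1 + y) / 2 * 1 + (1 - y) / 2 * (-1) = y
      ring
    · simp
  exact segment_subset_convexHull (by simp) (by simp) hseg

lemma thickening_subset_tubNbhd {ε : ℝ} (hε : 0 < ε) (S : Set (Fin 3 → ℝ)) :
    Metric.thickening (ε / 2) S ⊆ tubNbhd ε S := by
  intro p hp
  obtain ⟨q, hq, hd⟩ := Metric.mem_thickening_iff.1 hp
  have hi (i : Fin 3) : (p i - q i) ^ 2 < (ε / 2) ^ 2 := by
    have hdi : |p i - q i| < ε / 2 := (dist_le_pi_dist p q i).trans_lt hd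
    exact sq_lt_sq.2 (hdi.trans_le (le_abs_self _))
  refine ⟨q, hq, ?_⟩
  rw [euclDist, Real.sqrt_lt' hε, Fin.sum_univ_three]
  nlinarith [hi 0, hi 1, hi 2]

lemma IsEigenbasis.KVorbit_union_subset_thickening {M N B δ : ℝ} {g1 g2 g3 : Fin 3 → ℝ}
    (h : IsEigenbasis (cubicCompanion 1 M N) g1 g2 g3) (hB : 1 ≤ B)
    (hBδ : 9 * (|N| + 2) ^ 3 < δ * B) (hM : B ^ 2 + 2 * (|N| + 2) ^ 2 ≤ -M) :
    KVorbit g1 g2 g3 ![1, 0, 0] ∪ KVorbit g1 g2 g3 ![0, 1, 0] ⊆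
      Metric.thickening δ (convexHull ℝ {![1, 0, 0], ![0, 1, 0], ![0, -1, 0]}) := by
  obtain ⟨r, c, hsum, hpairs, hprod, horbit⟩ := h.exists_eigenfunctionals
  obtain ⟨hr0, hre, hBc, hrc⟩ := eigenvalue_bounds hsum hpairs hprod hB hM
  have hK : 2 ≤ |N| + 2 := le_add_of_nonneg_left (abs_nonneg N)
  have hδ : 0 < δ := pos_of_mul_pos_left (lt_trans (by positivity) hBδ) (by linarith)
  have hclose {p q : Fin 3 → ℝ} (hpq : ‖p - q‖ * |c.im| ≤ 9 * (|N| + 2) ^ 3) :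
      dist p q < δ := by
    rw [dist_eq_norm]
    refine lt_of_mul_lt_mul_right ?_ (abs_nonneg c.im)
    calc ‖p - q‖ * |c.im| ≤ 9 * (|N| + 2) ^ 3 := hpq
      _ < δ * B := hBδ
      _ ≤ δ * |c.im| := by gcongr
  rintro p (hp | hp) <;> obtain ⟨hpr, θ, hpc⟩ := horbit _ p hp <;>
    rw [Metric.mem_thickening_iff]
  · exact ⟨![1, 0, 0], subset_convexHull ℝ _ (by simp),
      hclose (norm_sub_mul_im_le_of_orbit_e1 hK hre (hB.trans hBc) hr0 hrc hpr hpc)⟩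
  · exact ⟨![0, Real.cos θ, 0], smul_e2_mem_convexHull (Real.abs_cos_le_one θ),
      hclose (norm_sub_mul_im_le_of_orbit_e2 hK hre (hB.trans hBc) hr0 hrc hpr hpc)⟩

theorem orbit_hull_flattens_type_0_1_0_0_1_dir_neg_general (m n : ℝ) {ε : ℝ} (hε : 0 < ε) :
    ∃ C : ℝ, 0 < C ∧ ∀ t : ℝ, C < t → ∀ g1 g2 g3 : Fin 3 → ℝ,
      IsEigenbasis !![0, 0, 1; 1, 0, m - t; 0, 1, n] g1 g2 g3 →
      convexHull ℝ (KVorbit g1 g2 g3 ![1, 0, 0] ∪ KVorbit g1 g2 g3 ![0, 1, 0]) ⊆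
        tubNbhd ε (convexHull ℝ {![1, 0, 0], ![0, 1, 0], ![0, -1, 0]}) := by
  set B : ℝ := 1 + 18 * (|n| + 2) ^ 3 / ε with hB
  have hB1 : 1 ≤ B := le_add_of_nonneg_right (by positivity)
  have hBε : 9 * (|n| + 2) ^ 3 < ε / 2 * B := by
    have hprod : ε / 2 * B = ε / 2 + 9 * (|n| + 2) ^ 3 := by
      rw [hB]
      field_simp
      ring
    linarith
  refine ⟨|m| + (B ^ 2 + 2 * (|n| + 2) ^ 2), by positivity, fun t ht g1 g2 g3 hg => ?_⟩
  have horbits := IsEigenbasis.KVorbit_union_subset_thickening hg hB1 hBε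
    (by linarith [le_abs_self m])
  exact (convexHull_min horbits ((convex_convexHull ℝ _).thickening _)).trans
    (thickening_subset_tubNbhd hε _)

/-- For NRS-rays of Hessenberg type ⟨0,1|0,0,1⟩ in the direction (−1,0): the
convex hull of the orbits of (1,0,0) and (0,1,0) eventually lies in the
ε-tubular neighborhood of the triangle (1,0,0), (0,1,0), (0,−1,0). -/
theorem orbit_hull_flattens_type_0_1_0_0_1_dir_neg (m n : ℤ)
    (hray : ∀ t : ℤ, 0 ≤ t →
      HasNRSSpectrum !![(0 : ℝ), 0, 1; 1, 0, (m : ℝ) - t; 0, 1, (n : ℝ)]) :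
    ∀ ε : ℝ, 0 < ε → ∃ C : ℝ, 0 < C ∧
      ∀ t : ℤ, C < (t : ℝ) →
        ∀ g1 g2 g3 : Fin 3 → ℝ,
          IsEigenbasis !![(0 : ℝ), 0, 1; 1, 0, (m : ℝ) - t; 0, 1, (n : ℝ)] g1 g2 g3 →
          convexHull ℝ
              (KVorbit g1 g2 g3 ![1, 0, 0] ∪ KVorbit g1 g2 g3 ![0, 1, 0]) ⊆
            tubNbhd ε
              (convexHull ℝ {![1, 0, 0], ![0, 1, 0], ![0, -1, 0]}) := by
  intro ε hε
  obtain ⟨C, hC, h⟩ := orbit_hull_flattens_type_0_1_0_0_1_dir_neg_general m n hε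
  exact ⟨C, hC, fun t => h t⟩
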